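/- arXiv:1303.2709 — 2 statements merged into one kernel-verified Lean document; each statement's English description precedes it below -/
import Mathlib

section
/- (Sufficiency, time-invariant networks.) Consider a time-invariant network modeled by a digraph D = (V, E) under the f-fraction local Byzantine model, where each normal node updates its value according to ARC-P with parameter f ∈ [0,1/2). If the network topology D is p-fraction robust for some p with 2f < p ≤ 1, then the normal agents achieve continuous-time resilient asymptotic consensus (CTRAC): for every choice of initial values and every admissible behavior of the Byzantine adversaries, all normal states converge to a common limit L ∈ ℝ and remain in [m_N(0), M_N(0)] for all t ≥ 0. -/
open Finset Filter Topology MeasureTheory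

namespace ARCP

variable {n : ℕ}

/-- `R` is a valid ARC-P removal of the (up to) `F` largest neighboring values. -/
def RemovalHigh (Nin : Finset (Fin n)) (v : Fin n → ℝ) (xi : ℝ) (F : ℕ)
    (R : Finset (Fin n)) : Prop :=
  R ⊆ Nin ∧
    (((Nin.filter fun j => xi < v j).card < F ∧ R = Nin.filter fun j => xi < v j) ∨
      (F ≤ (Nin.filter fun j => xi < v j).card ∧ R.card = F ∧
        ∀ j ∈ R, ∀ k ∈ Nin \ R, v k ≤ v j))

/-- `R` is a valid ARC-P removal of the (up to) `F` smallest neighboring values. -/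
def RemovalLow (Nin : Finset (Fin n)) (v : Fin n → ℝ) (xi : ℝ) (F : ℕ)
    (R : Finset (Fin n)) : Prop :=
  R ⊆ Nin ∧
    (((Nin.filter fun j => v j < xi).card < F ∧ R = Nin.filter fun j => v j < xi) ∨
      (F ≤ (Nin.filter fun j => v j < xi).card ∧ R.card = F ∧
        ∀ j ∈ R, ∀ k ∈ Nin \ R, v j ≤ v k))

/-- `R` is a valid set of in-neighbors removed by the ARC-P rule with threshold `F`. -/
def IsARCPRemoval (Nin : Finset (Fin n)) (v : Fin n → ℝ) (xi : ℝ) (F : ℕ)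
    (R : Finset (Fin n)) : Prop :=
  ∃ Rhi Rlo : Finset (Fin n),
    R = Rhi ∪ Rlo ∧ RemovalHigh Nin v xi F Rhi ∧ RemovalLow Nin v xi F Rlo

/-- The ARC-P control input: `∑_{j ∈ Nin \ R} w j * (v j - xi)`. -/
def arcpUpdate (Nin R : Finset (Fin n)) (w : Fin n → ℝ) (v : Fin n → ℝ) (xi : ℝ) : ℝ :=
  ∑ j ∈ Nin \ R, w j * (v j - xi)

/-- `S` is a `p`-fraction edge reachable set of the digraph with in-neighborhoods `Nin`. -/
def FracEdgeReachable (Nin : Fin n → Finset (Fin n)) (p : ℝ) (S : Finset (Fin n)) : Prop :=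
  (∃ i ∈ S, 0 < (Nin i).card ∧ ⌈p * (((Nin i).card : ℝ))⌉₊ ≤ ((Nin i) \ S).card) ∨
    (p = 0 ∧ ∀ i ∈ S, ((Nin i) \ S).card = 0)

/-- The digraph with in-neighborhoods `Nin` is `p`-fraction robust: for every pair of
nonempty, disjoint subsets of nodes, at least one of them is `p`-fraction edge reachable. -/
def FracRobust (Nin : Fin n → Finset (Fin n)) (p : ℝ) : Prop :=
  ∀ S₁ S₂ : Finset (Fin n), S₁.Nonempty → S₂.Nonempty → Disjoint S₁ S₂ →
    FracEdgeReachable Nin p S₁ ∨ FracEdgeReachable Nin p S₂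

end ARCP

namespace ARCP

lemma isARCPRemoval_neg {n : ℕ} {Nin : Finset (Fin n)} {v : Fin n → ℝ} {xi : ℝ} {F : ℕ}
    {R : Finset (Fin n)} (h : IsARCPRemoval Nin v xi F R) :
    IsARCPRemoval Nin (fun j => - v j) (-xi) F R := by
  obtain ⟨Rhi, Rlo, rfl, ⟨h1, h2⟩, ⟨h3, h4⟩⟩ := h
  refine ⟨Rlo, Rhi, Finset.union_comm _ _, ⟨h3, ?_⟩, ⟨h1, ?_⟩⟩
  · simpa only [neg_lt_neg_iff, neg_le_neg_iff] using h4
  · simpa only [neg_lt_neg_iff, neg_le_neg_iff] using h2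

lemma high_sub {n : ℕ} {Nin : Finset (Fin n)} {v : Fin n → ℝ} {xi : ℝ} {F : ℕ}
    {R : Finset (Fin n)} (h : RemovalHigh Nin v xi F R) : ∀ j ∈ R, xi < v j := by
  intro j hj
  obtain ⟨h1, ⟨_, h2⟩ | ⟨h2, h3, h4⟩⟩ := h
  · rw [h2] at hj
    exact (Finset.mem_filter.1 hj).2
  · by_contra hlt
    push Not at hlt
    have hsub : (Nin.filter fun j => xi < v j) ⊆ R.erase j := by
      intro k hk
      obtain ⟨hk1, hk2⟩ := Finset.mem_filter.1 hk
      rw [Finset.mem_erase]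
      refine ⟨?_, ?_⟩
      · rintro rfl
        linarith
      · by_contra hkR
        have := h4 j hj k (Finset.mem_sdiff.2 ⟨hk1, hkR⟩)
        linarith
    have := Finset.card_le_card hsub
    have h5 := Finset.card_erase_lt_of_mem hj
    omega

lemma low_card {n : ℕ} {Nin : Finset (Fin n)} {v : Fin n → ℝ} {xi : ℝ} {F : ℕ}
    {R : Finset (Fin n)} (h : RemovalLow Nin v xi F R) : R.card ≤ F := by
  obtain ⟨h1, ⟨h3, h2⟩ | ⟨h2, h3, h4⟩⟩ := h
  · rw [h2]; exact h3.le
  · exact h3.le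

lemma retained_le {n : ℕ} {Nin Normal : Finset (Fin n)} {v : Fin n → ℝ} {xi U : ℝ} {F : ℕ}
    {R : Finset (Fin n)} (h : RemovalHigh Nin v xi F R)
    (hloc : (Nin.filter fun j => j ∉ Normal).card ≤ F)
    (hxi : xi ≤ U) (hv : ∀ j ∈ Normal, v j ≤ U) : ∀ j ∈ Nin \ R, v j ≤ U := by
  intro j hj
  obtain ⟨hj1, hj2⟩ := Finset.mem_sdiff.1 hj
  by_contra hlt
  push Not at hlt
  obtain ⟨h1, ⟨_, h2⟩ | ⟨h2, h3, h4⟩⟩ := h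
  · apply hj2
    rw [h2]
    exact Finset.mem_filter.2 ⟨hj1, by linarith⟩
  · have hsub : insert j R ⊆ Nin.filter fun j => j ∉ Normal := by
      intro k hk
      rw [Finset.mem_filter]
      rcases Finset.mem_insert.1 hk with rfl | hk
      · exact ⟨hj1, fun hN => by linarith [hv _ hN]⟩
      · exact ⟨h1 hk, fun hN => by linarith [hv _ hN, h4 k hk j hj]⟩
    have := Finset.card_le_card hsub
    rw [Finset.card_insert_of_notMem hj2] at this
    omega

lemma upd_le {n : ℕ} {Nin Normal : Finset (Fin n)} {v w : Fin n → ℝ} {xi U α β : ℝ} {F : ℕ}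
    {R : Finset (Fin n)} (h : IsARCPRemoval Nin v xi F R)
    (hloc : (Nin.filter fun j => j ∉ Normal).card ≤ F)
    (hα : 0 < α) (hw : ∀ j ∈ Nin, α ≤ w j ∧ w j ≤ β) (hβ : α ≤ β)
    (hxi : xi ≤ U) (hv : ∀ j ∈ Normal, v j ≤ U) :
    arcpUpdate Nin R w v xi ≤ (n * β + 1) * (U - xi) ∧
    ∀ (T : Finset (Fin n)) (c : ℝ), T ⊆ Nin → F < T.card → (∀ j ∈ T, v j ≤ c) → c < xi →
      arcpUpdate Nin R w v xi ≤ α * (c - xi) + (n * β + 1) * (U - xi) := by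
  obtain ⟨Rhi, Rlo, rfl, hhi, hlo⟩ := h
  have hret := retained_le hhi hloc hxi hv
  have hb : ∀ j ∈ Nin \ (Rhi ∪ Rlo), w j * (v j - xi) ≤ β * (U - xi) := by
    intro j hj
    obtain ⟨hj1, hj2⟩ := Finset.mem_sdiff.1 hj
    have h1 := hret j (Finset.mem_sdiff.2 ⟨hj1, fun hh => hj2 (Finset.mem_union_left _ hh)⟩)
    obtain ⟨h2, h3⟩ := hw j hj1
    calc w j * (v j - xi) ≤ w j * (U - xi) := by
          apply mul_le_mul_of_nonneg_left <;> linarith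
      _ ≤ _ := by apply mul_le_mul_of_nonneg_right <;> linarith
  have hsum : ∀ S : Finset (Fin n), S ⊆ Nin \ (Rhi ∪ Rlo) →
      ∑ j ∈ S, w j * (v j - xi) ≤ (n * β + 1) * (U - xi) := by
    intro S hS
    have h1 : ∑ j ∈ S, w j * (v j - xi) ≤ S.card • (β * (U - xi)) :=
      Finset.sum_le_card_nsmul _ _ _ (fun j hj => hb j (hS hj))
    have h2 : (S.card : ℝ) ≤ n := by
      have := Finset.card_le_univ S
      rw [Fintype.card_fin] at this
      exact_mod_cast this
    rw [nsmul_eq_mul] at h1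
    have h3 : 0 ≤ β * (U - xi) := mul_nonneg (by linarith) (by linarith)
    nlinarith
  refine ⟨hsum _ (Finset.Subset.refl _), ?_⟩
  intro T c hT hc hTc hcx
  have : ∃ j ∈ T, j ∉ Rlo := by
    by_contra hcon
    push Not at hcon
    have h1 := Finset.card_le_card (show T ⊆ Rlo from hcon)
    have h2 := low_card hlo
    omega
  obtain ⟨j, hjT, hj⟩ := this
  have hjm : j ∈ Nin \ (Rhi ∪ Rlo) := by
    rw [Finset.mem_sdiff, Finset.mem_union]
    refine ⟨hT hjT, ?_⟩
    rintro (hh | hh)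
    · have := high_sub hhi j hh
      linarith [hTc j hjT]
    · exact hj hh
  unfold arcpUpdate
  rw [← Finset.add_sum_erase _ _ hjm]
  have h1 := hsum _ (Finset.erase_subset j _)
  obtain ⟨h2, h3⟩ := hw j (hT hjT)
  have h4 := hTc j hjT
  have h5 : w j * (v j - xi) ≤ α * (c - xi) := by nlinarith
  linarith

lemma barrier {g u : ℝ → ℝ} {a b c K : ℝ} (hab : a ≤ b) (hg : Continuous g)
    (hu : ∀ s t, a ≤ s → s ≤ t → t ≤ b → IntervalIntegrable u volume s t)
    (hs : ∀ s t, a ≤ s → s ≤ t → t ≤ b → g t = g s + ∫ r in s..t, u r)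
    (hK : 0 ≤ K) (hga : g a ≤ c) (hle : ∀ s, a ≤ s → s ≤ b → c < g s → u s ≤ K) :
    g b ≤ c + K * (b - a) := by
  have hcomp : IsCompact (Set.Icc a b ∩ g ⁻¹' Set.Iic c) :=
    isCompact_Icc.inter_right (isClosed_Iic.preimage hg)
  obtain ⟨s, ⟨⟨hs1, hs2⟩, hs3⟩, hmax⟩ := hcomp.exists_isMaxOn ⟨a, ⟨le_rfl, hab⟩, hga⟩
    continuousOn_id
  have hs3' : g s ≤ c := hs3
  have h1 : ∫ r in s..b, u r ≤ ∫ r in s..b, K := by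
    apply intervalIntegral.integral_mono_on_of_le_Ioo hs2 (hu s b hs1 hs2 le_rfl)
      intervalIntegrable_const
    intro r hr
    apply hle r (by linarith [hr.1]) hr.2.le
    by_contra hcon
    push Not at hcon
    have : r ≤ s := hmax ⟨⟨by linarith [hr.1], hr.2.le⟩, hcon⟩
    linarith [hr.1]
  rw [intervalIntegral.integral_const, smul_eq_mul] at h1
  rw [hs s b hs1 hs2 le_rfl]
  nlinarith

/-- one-sided system -/
structure Up {n : ℕ} (N : Finset (Fin n)) (x u : Fin n → ℝ → ℝ) (G α : ℝ)
    (good : Fin n → Finset (Fin n) → Prop) : Prop where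
  hG : 0 < G
  hα : 0 < α
  cont : ∀ i ∈ N, Continuous (x i)
  intg : ∀ i ∈ N, ∀ s t, 0 ≤ s → s ≤ t → IntervalIntegrable (u i) volume s t
  sol : ∀ i ∈ N, ∀ s t, 0 ≤ s → s ≤ t → x i t = x i s + ∫ r in s..t, u i r
  A : ∀ i ∈ N, ∀ s U, 0 ≤ s → (∀ j ∈ N, x j s ≤ U) → u i s ≤ G * (U - x i s)
  B : ∀ i ∈ N, ∀ s U c T, 0 ≤ s → (∀ j ∈ N, x j s ≤ U) → good i T → T ⊆ N →
    (∀ j ∈ T, x j s ≤ c) → c < x i s → u i s ≤ α * (c - x i s) + G * (U - x i s)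

section
variable {n : ℕ} {N : Finset (Fin n)} {x u : Fin n → ℝ → ℝ} {G α : ℝ}
    {good : Fin n → Finset (Fin n) → Prop}

lemma Up.bar (h : Up N x u G α good) {i : Fin n} (hi : i ∈ N) {a b c K : ℝ} (ha : 0 ≤ a)
    (hab : a ≤ b) (hK : 0 ≤ K) (hga : x i a ≤ c)
    (hle : ∀ s, a ≤ s → s ≤ b → c < x i s → u i s ≤ K) : x i b ≤ c + K * (b - a) :=
  barrier hab (h.cont i hi) (fun s t hs hst _ => h.intg i hi s t (by linarith) hst)
    (fun s t hs hst _ => h.sol i hi s t (by linarith) hst) hK hga hle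

lemma Up.inv_short (h : Up N x u G α good) {a b U : ℝ} (ha : 0 ≤ a) (hab : a ≤ b)
    (hb : G * (b - a) ≤ 1 / 2) (hU : ∀ i ∈ N, x i a ≤ U) :
    ∀ i ∈ N, ∀ t, a ≤ t → t ≤ b → x i t ≤ U := by
  intro i₀ hi₀ t₀ ht₀ ht₀b
  have hNe : N.Nonempty := ⟨i₀, hi₀⟩
  have hc : Continuous fun t => N.sup' hNe fun i => x i t := by
    have := Continuous.finset_sup' hNe (f := x) (fun i hi => h.cont i hi)
    convert this using 2 with t
    simp [Finset.sup'_apply]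
  obtain ⟨s, ⟨hs1, hs2⟩, hmax⟩ := isCompact_Icc.exists_isMaxOn ⟨a, le_rfl, hab⟩ hc.continuousOn
  obtain ⟨i, hi, hie⟩ := Finset.exists_mem_eq_sup' hNe (fun i => x i s)
  have hm : ∀ j ∈ N, ∀ t, a ≤ t → t ≤ b → x j t ≤ x i s := by
    intro j hj t h1 h2
    have h3 : (N.sup' hNe fun i => x i t) ≤ N.sup' hNe fun i => x i s := hmax ⟨h1, h2⟩
    rw [hie] at h3
    exact (Finset.le_sup' (fun i => x i t) hj).trans h3
  refine (hm i₀ hi₀ t₀ ht₀ ht₀b).trans ?_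
  by_contra hcon
  push Not at hcon
  have hG := h.hG
  have h1 := h.bar hi ha hs1 (c := U) (K := G * (x i s - U)) (by nlinarith) (hU i hi) (by
    intro r hr1 hr2 hr3
    refine (h.A i hi r (x i s) (by linarith) (fun j hj => hm j hj r hr1 (by linarith))).trans ?_
    apply mul_le_mul_of_nonneg_left _ hG.le
    linarith)
  have h2 : G * (s - a) ≤ 1 / 2 := by nlinarith
  nlinarith

lemma Up.inv (h : Up N x u G α good) {a U : ℝ} (ha : 0 ≤ a) (hU : ∀ i ∈ N, x i a ≤ U) :
    ∀ i ∈ N, ∀ t, a ≤ t → x i t ≤ U := by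
  have hG := h.hG
  have key : ∀ k : ℕ, ∀ i ∈ N, ∀ t, a ≤ t → t ≤ a + k * (1 / (2 * G)) → x i t ≤ U := by
    intro k
    induction k with
    | zero =>
      intro i hi t h1 h2
      have : t = a := by simp at h2; linarith
      rw [this]; exact hU i hi
    | succ k ih =>
      intro i hi t h1 h2
      have h0 : 0 ≤ k * (1 / (2 * G)) := by positivity
      have h0' : 0 ≤ (1 / (2 * G)) := by positivity
      rcases le_total t (a + k * (1 / (2 * G))) with h3 | h3
      · exact ih i hi t h1 h3
      · refine h.inv_short (a := a + k * (1 / (2 * G))) (b := a + k * (1 / (2 * G)) + 1 / (2 * G))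
          (by linarith) (by linarith) ?_ (fun j hj => ih j hj _ (by linarith) le_rfl) i hi t h3 ?_
        · rw [add_sub_cancel_left]
          apply le_of_eq
          field_simp
        · push_cast at h2
          linarith
  intro i hi t ht
  obtain ⟨k, hk⟩ := exists_nat_ge ((t - a) / (1 / (2 * G)))
  refine key k i hi t ht ?_
  rw [div_le_iff₀ (by positivity)] at hk
  linarith

lemma Up.stay (h : Up N x u G α good) {a t U δ : ℝ} (ha : 0 ≤ a)
    (hU : ∀ i ∈ N, ∀ t, a ≤ t → x i t ≤ U) (hδ : 0 ≤ δ) (hat : a ≤ t)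
    (ht : G * (t - a) ≤ 1 / 2) {i : Fin n} (hi : i ∈ N) (hx : x i a ≤ U - δ) :
    x i t ≤ U - δ / 2 := by
  have hG := h.hG
  have := h.bar hi ha hat (c := U - δ) (K := G * δ) (by positivity) hx (by
    intro s h1 h2 h3
    refine (h.A i hi s U (by linarith) (fun j hj => hU j hj s h1)).trans ?_
    apply mul_le_mul_of_nonneg_left _ hG.le
    linarith)
  nlinarith

lemma Up.pull (h : Up N x u G α good) {a U δ : ℝ} (ha : 0 ≤ a)
    (hU : ∀ i ∈ N, ∀ t, a ≤ t → x i t ≤ U) (hδ : 0 ≤ δ)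
    {i : Fin n} (hi : i ∈ N) {T : Finset (Fin n)} (hT : good i T) (hTN : T ⊆ N)
    (hx : ∀ j ∈ T, x j a ≤ U - δ) :
    x i (a + 1 / (2 * G)) ≤ U - α / (16 * (α + G)) * δ := by
  have hG := h.hG
  have hα := h.hα
  set τ := 1 / (2 * G) with hτ
  have hτ0 : 0 < τ := by positivity
  have hGτ : G * τ = 1 / 2 := by rw [hτ]; field_simp
  set κ := α / (8 * (α + G)) with hκ
  have hκ0 : 0 < κ := by positivity
  have hκe : κ * (α + G) = α / 8 := by rw [hκ]; field_simp
  have hκ' : α / (16 * (α + G)) = κ / 2 := by rw [hκ]; field_simp; norm_num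
  rw [hκ']
  have hstay : ∀ j ∈ T, ∀ t, a ≤ t → t ≤ a + τ → x j t ≤ U - δ / 2 := by
    intro j hj t h1 h2
    exact h.stay ha hU hδ h1 (by nlinarith) (hTN hj) (hx j hj)
  have hex : ∃ s, a ≤ s ∧ s ≤ a + τ ∧ x i s ≤ U - κ * δ := by
    by_contra hcon
    push Not at hcon
    rcases hδ.eq_or_lt with hδ0 | hδ0
    · have h1 := hcon a le_rfl (by linarith)
      have h2 := hU i hi a le_rfl
      rw [← hδ0] at h1
      linarith
    have hκ4 : κ ≤ 1 / 8 := by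
      by_contra hh
      push Not at hh
      nlinarith
    have hd : ∀ s, a ≤ s → s ≤ a + τ → u i s ≤ - (α * δ / 4) := by
      intro s h1 h2
      have h3 := hcon s h1 h2
      have h4 := h.B i hi s U (U - δ / 2) T (by linarith) (fun j hj => hU j hj s h1) hT hTN
        (fun j hj => hstay j hj s h1 h2) (by nlinarith)
      have h5 : (α + G) * (U - x i s) ≤ (α + G) * (κ * δ) :=
        mul_le_mul_of_nonneg_left (by linarith) (by linarith)
      have h6 : (α + G) * (κ * δ) = α / 8 * δ := by rw [← hκe]; ring
      nlinarith
    have h1 : ∫ r in a..(a + τ), u i r ≤ ∫ r in a..(a + τ), - (α * δ / 4) := by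
      apply intervalIntegral.integral_mono_on (by linarith) (h.intg i hi _ _ ha (by linarith))
        intervalIntegrable_const
      intro r hr
      exact hd r hr.1 hr.2
    rw [intervalIntegral.integral_const, smul_eq_mul] at h1
    have h2 := h.sol i hi a (a + τ) ha (by linarith)
    have h3 := hcon (a + τ) (by linarith) le_rfl
    have h4 := hU i hi a le_rfl
    have h5 : κ ≤ τ * α / 4 := by
      have : κ * G ≤ α / 8 := by nlinarith
      have h7 : κ * G ≤ (τ * α / 4) * G := by nlinarith
      exact le_of_mul_le_mul_right h7 hG
    nlinarith
  obtain ⟨s, hs1, hs2, hs3⟩ := hex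
  have := h.stay (a := s) (t := a + τ) (by linarith) (fun i hi t ht => hU i hi t (by linarith))
    (δ := κ * δ) (by positivity) hs2 (by nlinarith) hi hs3
  linarith

end

section
variable {n : ℕ} {N : Finset (Fin n)} {x u : Fin n → ℝ → ℝ} {G α : ℝ}
    {good : Fin n → Finset (Fin n) → Prop}

lemma Up.rho (h : Up N x u G α good) : 0 < α / (16 * (α + G)) ∧ α / (16 * (α + G)) ≤ 1 / 2 := by
  have hG := h.hG
  have hα := h.hα
  refine ⟨by positivity, ?_⟩
  rw [div_le_iff₀ (by positivity)]
  linarith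

lemma Up.sub (h : Up N x u G α good) {a U δ : ℝ} (ha : 0 ≤ a)
    (hU : ∀ i ∈ N, ∀ t, a ≤ t → x i t ≤ U) (hδ : 0 ≤ δ) :
    (N.filter fun j => U - α / (16 * (α + G)) * δ < x j (a + 1 / (2 * G))) ⊆
      N.filter fun j => U - δ < x j a := by
  intro j hj
  obtain ⟨hj1, hj2⟩ := Finset.mem_filter.1 hj
  refine Finset.mem_filter.2 ⟨hj1, ?_⟩
  by_contra hcon
  push Not at hcon
  have hG := h.hG
  have h1 := h.stay ha hU hδ (t := a + 1 / (2 * G)) (le_add_of_nonneg_right (by positivity))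
    (by rw [add_sub_cancel_left]; apply le_of_eq; field_simp) hj1 hcon
  have := h.rho.2
  nlinarith

lemma Up.lt (h : Up N x u G α good) {a U δ : ℝ} (ha : 0 ≤ a)
    (hU : ∀ i ∈ N, ∀ t, a ≤ t → x i t ≤ U) (hδ : 0 ≤ δ)
    (hi : ∃ i ∈ (N.filter fun j => U - δ < x j a), ∃ T ⊆ N,
      Disjoint T (N.filter fun j => U - δ < x j a) ∧ good i T) :
    (N.filter fun j => U - α / (16 * (α + G)) * δ < x j (a + 1 / (2 * G))).card <
      (N.filter fun j => U - δ < x j a).card := by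
  obtain ⟨i, hi, T, hTN, hd, hT⟩ := hi
  apply Finset.card_lt_card
  refine (Finset.ssubset_iff_of_subset (h.sub ha hU hδ)).2 ⟨i, hi, ?_⟩
  intro hi'
  have h1 := (Finset.mem_filter.1 hi').2
  have h2 := h.pull ha hU hδ (Finset.mem_filter.1 hi).1 hT hTN (by
    intro j hj
    by_contra hcon
    push Not at hcon
    exact Finset.disjoint_left.1 hd hj (Finset.mem_filter.2 ⟨hTN hj, hcon⟩))
  linarith

lemma contract (h1 : Up N x u G α good)
    (h2 : Up N (fun i t => - x i t) (fun i t => - u i t) G α good)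
    (hgood : ∀ S₁ S₂ : Finset (Fin n), S₁.Nonempty → S₂.Nonempty → Disjoint S₁ S₂ →
      S₁ ⊆ N → S₂ ⊆ N → (∃ i ∈ S₁, ∃ T ⊆ N, Disjoint T S₁ ∧ good i T) ∨
        (∃ i ∈ S₂, ∃ T ⊆ N, Disjoint T S₂ ∧ good i T))
    {a U L : ℝ} (ha : 0 ≤ a) (hLU : L ≤ U)
    (hU : ∀ i ∈ N, x i a ≤ U) (hL : ∀ i ∈ N, L ≤ x i a) :
    ∃ U' L' : ℝ, L' ≤ U' ∧ (∀ i ∈ N, x i (a + n * (1 / (2 * G))) ≤ U') ∧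
      (∀ i ∈ N, L' ≤ x i (a + n * (1 / (2 * G)))) ∧
      U' - L' ≤ (1 - (α / (16 * (α + G))) ^ n / 2) * (U - L) := by
  have hG := h1.hG
  obtain ⟨hρ0, hρ1⟩ := h1.rho
  have hU' := h1.inv ha hU
  have hL' := h2.inv ha (U := -L) (fun i hi => neg_le_neg (hL i hi))
  set τ := 1 / (2 * G) with hτ
  have hτ0 : 0 < τ := by positivity
  set ρ := α / (16 * (α + G)) with hρ
  have hpow : ∀ k : ℕ, 0 < ρ ^ k ∧ ρ ^ k ≤ 1 := fun k =>
    ⟨by positivity, pow_le_one₀ hρ0.le (by linarith)⟩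
  have key : ∀ k : ℕ,
      (N.filter fun j => U - ρ ^ k * ((U - L) / 2) < x j (a + k * τ)) = ∅ ∨
      (N.filter fun j => -L - ρ ^ k * ((U - L) / 2) < - x j (a + k * τ)) = ∅ ∨
      (N.filter fun j => U - ρ ^ k * ((U - L) / 2) < x j (a + k * τ)).card +
      (N.filter fun j => -L - ρ ^ k * ((U - L) / 2) < - x j (a + k * τ)).card + k ≤ n := by
    intro k
    have hdis : ∀ k : ℕ, Disjoint (N.filter fun j => U - ρ ^ k * ((U - L) / 2) < x j (a + k * τ))
        (N.filter fun j => -L - ρ ^ k * ((U - L) / 2) < - x j (a + k * τ)) := by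
      intro k
      rw [Finset.disjoint_left]
      intro j hj1 hj2
      have e1 := (Finset.mem_filter.1 hj1).2
      have e2 := (Finset.mem_filter.1 hj2).2
      have := (hpow k).2
      nlinarith
    induction k with
    | zero =>
      right; right
      rw [← Finset.card_union_of_disjoint (hdis 0), add_zero]
      refine (Finset.card_le_univ _).trans ?_
      rw [Fintype.card_fin]
    | succ k ih =>
      have hk0 : 0 ≤ a + k * τ := by positivity
      have hak : a ≤ a + k * τ := le_add_of_nonneg_right (by positivity)
      have hδ : 0 ≤ ρ ^ k * ((U - L) / 2) := mul_nonneg (hpow k).1.le (by linarith)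
      have s1 := h1.sub hk0 (fun i hi t ht => hU' i hi t (hak.trans ht)) hδ
      have s2 := h2.sub hk0 (fun i hi t ht => hL' i hi t (hak.trans ht)) hδ
      have l1 := h1.lt hk0 (fun i hi t ht => hU' i hi t (hak.trans ht)) hδ
      have l2 := h2.lt hk0 (fun i hi t ht => hL' i hi t (hak.trans ht)) hδ
      rw [← hρ, ← hτ] at s1 s2 l1 l2
      have e1 : ρ * (ρ ^ k * ((U - L) / 2)) = ρ ^ (k + 1) * ((U - L) / 2) := by ring
      have e2 : a + k * τ + τ = a + ((k + 1 : ℕ) : ℝ) * τ := by push_cast; ring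
      rw [e1, e2] at s1 s2 l1 l2
      have hd := hdis k
      generalize (N.filter fun j => U - ρ ^ (k+1) * ((U - L) / 2) < x j (a + (k+1 : ℕ) * τ)) = A'
        at *
      generalize (N.filter fun j => -L - ρ ^ (k+1) * ((U - L) / 2) < - x j (a + (k+1 : ℕ) * τ)) = B'
        at *
      have hA := Finset.filter_subset (fun j => U - ρ ^ k * ((U - L) / 2) < x j (a + k * τ)) N
      have hB := Finset.filter_subset (fun j => -L - ρ ^ k * ((U - L) / 2) < - x j (a + k * τ)) N
      generalize (N.filter fun j => U - ρ ^ k * ((U - L) / 2) < x j (a + k * τ)) = A at *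
      generalize (N.filter fun j => -L - ρ ^ k * ((U - L) / 2) < - x j (a + k * τ)) = B at *
      rcases Finset.eq_empty_or_nonempty A with hAe | hAe
      · left; rw [hAe] at s1; exact Finset.subset_empty.1 s1
      rcases Finset.eq_empty_or_nonempty B with hBe | hBe
      · right; left; rw [hBe] at s2; exact Finset.subset_empty.1 s2
      right; right
      have hle : A.card + B.card + k ≤ n := by
        rcases ih with ih | ih | ih
        · exact absurd ih hAe.ne_empty
        · exact absurd ih hBe.ne_empty
        · exact ih
      have c1 := Finset.card_le_card s1
      have c2 := Finset.card_le_card s2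
      rcases hgood A B hAe hBe hd hA hB with hh | hh
      · have := l1 hh
        omega
      · have := l2 hh
        omega
  have hn : a ≤ a + n * τ := le_add_of_nonneg_right (by positivity)
  have hp := hpow n
  have hd : ρ ^ n * ((U - L) / 2) ≤ (U - L) := by nlinarith
  have fin : (N.filter fun j => U - ρ ^ n * ((U - L) / 2) < x j (a + n * τ)) = ∅ ∨
      (N.filter fun j => -L - ρ ^ n * ((U - L) / 2) < - x j (a + n * τ)) = ∅ := by
    rcases key n with h | h | h
    · exact Or.inl h
    · exact Or.inr h
    · left; rw [← Finset.card_eq_zero]; omega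
  rcases fin with h | h
  · refine ⟨U - ρ ^ n * ((U - L) / 2), L, by linarith, ?_, ?_, by linarith⟩
    · intro i hi
      have := Finset.filter_eq_empty_iff.1 h hi
      linarith
    · intro i hi
      have := hL' i hi _ hn
      linarith
  · refine ⟨U, L + ρ ^ n * ((U - L) / 2), by linarith, ?_, ?_, by linarith⟩
    · intro i hi
      exact hU' i hi _ hn
    · intro i hi
      have := Finset.filter_eq_empty_iff.1 h hi
      linarith

lemma consensus (h1 : Up N x u G α good)
    (h2 : Up N (fun i t => - x i t) (fun i t => - u i t) G α good)
    (hgood : ∀ S₁ S₂ : Finset (Fin n), S₁.Nonempty → S₂.Nonempty → Disjoint S₁ S₂ →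
      S₁ ⊆ N → S₂ ⊆ N → (∃ i ∈ S₁, ∃ T ⊆ N, Disjoint T S₁ ∧ good i T) ∨
        (∃ i ∈ S₂, ∃ T ⊆ N, Disjoint T S₂ ∧ good i T)) (hNe : N.Nonempty) :
    ∃ L : ℝ, ∀ i ∈ N, Tendsto (x i) atTop (𝓝 L) := by
  obtain ⟨hρ0, hρ1⟩ := h1.rho
  have hG := h1.hG
  set q := 1 - (α / (16 * (α + G))) ^ n / 2 with hq
  have hp0 : 0 < (α / (16 * (α + G))) ^ n := by positivity
  have hp1 : (α / (16 * (α + G))) ^ n ≤ 1 := pow_le_one₀ hρ0.le (by linarith)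
  have hq0 : 0 ≤ q := by linarith
  have hq1 : q < 1 := by linarith
  obtain ⟨D, hD⟩ : ∃ D : ℝ, ∀ k : ℕ, ∃ U L : ℝ, L ≤ U ∧
      (∀ i ∈ N, x i (k * (n * (1 / (2 * G)))) ≤ U) ∧
      (∀ i ∈ N, L ≤ x i (k * (n * (1 / (2 * G))))) ∧ U - L ≤ q ^ k * D := by
    refine ⟨(N.sup' hNe fun j => x j 0) - (N.inf' hNe fun j => x j 0), fun k => ?_⟩
    induction k with
    | zero =>
      refine ⟨_, _, ?_, ?_, ?_, by rw [pow_zero, one_mul]⟩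
      · obtain ⟨i, hi⟩ := hNe
        exact (Finset.inf'_le (fun j => x j 0) hi).trans (Finset.le_sup' (fun j => x j 0) hi)
      · intro i hi
        simp only [Nat.cast_zero, zero_mul]
        exact Finset.le_sup' (fun j => x j 0) hi
      · intro i hi
        simp only [Nat.cast_zero, zero_mul]
        exact Finset.inf'_le (fun j => x j 0) hi
    | succ k ih =>
      obtain ⟨U, L, hLU, hU, hL, hd⟩ := ih
      obtain ⟨U', L', hLU', hU', hL', hd'⟩ :=
        contract h1 h2 hgood (a := k * (n * (1 / (2 * G)))) (by positivity) hLU hU hL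
      have e : (k : ℝ) * (n * (1 / (2 * G))) + n * (1 / (2 * G))
        = ((k + 1 : ℕ) : ℝ) * (n * (1 / (2 * G))) := by push_cast; ring
      rw [e] at hU' hL'
      refine ⟨U', L', hLU', hU', hL', hd'.trans ?_⟩
      rw [pow_succ']
      rw [← hq, mul_assoc]
      exact mul_le_mul_of_nonneg_left hd hq0
  have hC : ∀ ε > 0, ∃ T : ℝ, ∀ i ∈ N, ∀ j ∈ N, ∀ s ≥ T, ∀ t ≥ T, dist (x i s) (x j t) < ε := by
    intro ε hε
    have hlim : Tendsto (fun k : ℕ => q ^ k * D) atTop (𝓝 (0 * D)) :=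
      (tendsto_pow_atTop_nhds_zero_of_lt_one hq0 hq1).mul_const D
    rw [zero_mul] at hlim
    obtain ⟨k, hk⟩ := (hlim.eventually_lt_const hε).exists
    obtain ⟨U, L, hLU, hU, hL, hd⟩ := hD k
    have h0 : (0 : ℝ) ≤ k * (n * (1 / (2 * G))) := by positivity
    refine ⟨k * (n * (1 / (2 * G))), ?_⟩
    have hU' := h1.inv h0 hU
    have hL' := h2.inv h0 (U := -L) (fun i hi => neg_le_neg (hL i hi))
    intro i hi j hj s hs t ht
    rw [Real.dist_eq, abs_lt]
    have a1 := hU' i hi s hs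
    have a2 := hU' j hj t ht
    have a3 := hL' i hi s hs
    have a4 := hL' j hj t ht
    constructor <;> linarith
  obtain ⟨i₀, hi₀⟩ := hNe
  have hcau : CauchySeq (x i₀) := by
    rw [Metric.cauchySeq_iff]
    intro ε hε
    obtain ⟨T, hT⟩ := hC ε hε
    exact ⟨T, fun s hs t ht => hT i₀ hi₀ i₀ hi₀ s hs t ht⟩
  obtain ⟨L, hL⟩ := cauchySeq_tendsto_of_complete hcau
  refine ⟨L, fun i hi => ?_⟩
  refine hL.congr_dist ?_
  rw [Metric.tendsto_atTop]
  intro ε hε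
  obtain ⟨T, hT⟩ := hC ε hε
  refine ⟨T, fun t ht => ?_⟩
  rw [Real.dist_eq, sub_zero, abs_of_nonneg dist_nonneg]
  exact hT i₀ hi₀ i hi t ht t ht

end

lemma mkUp {n : ℕ}
    (Nin : Fin n → Finset (Fin n))
    (Normal : Finset (Fin n)) (F : Fin n → ℕ)
    (hlocal : ∀ i ∈ Normal, ((Nin i).filter fun j => j ∉ Normal).card ≤ F i)
    (α β : ℝ) (hα : 0 < α) (hαβ : α ≤ β)
    (w : ℝ → Fin n → Fin n → ℝ)
    (hw : ∀ t : ℝ, ∀ i ∈ Normal, ∀ j ∈ Nin i, α ≤ w t j i ∧ w t j i ≤ β)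
    (x : Fin n → ℝ → ℝ)
    (xc : Fin n → Fin n → ℝ → ℝ)
    (hxc : ∀ j ∈ Normal, ∀ i, xc j i = x j)
    (hbyz : ∀ j i, Continuous (xc j i))
    (R : ℝ → Fin n → Finset (Fin n))
    (hR : ∀ t : ℝ, ∀ i ∈ Normal, IsARCPRemoval (Nin i) (fun j => xc j i t) (x i t)
      (F i) (R t i))
    (hint : ∀ i ∈ Normal, ∀ t : ℝ, 0 ≤ t → IntervalIntegrable
      (fun s => arcpUpdate (Nin i) (R s i) (fun j => w s j i)
        (fun j => xc j i s) (x i s)) volume 0 t)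
    (hsol : ∀ i ∈ Normal, ∀ t : ℝ, 0 ≤ t → x i t = x i 0 + ∫ s in (0 : ℝ)..t,
      arcpUpdate (Nin i) (R s i) (fun j => w s j i) (fun j => xc j i s) (x i s)) :
    Up Normal x (fun i s => arcpUpdate (Nin i) (R s i) (fun j => w s j i)
        (fun j => xc j i s) (x i s)) (n * β + 1) α (fun i T => T ⊆ Nin i ∧ F i < T.card) := by
  have hβ : 0 < β := by linarith
  refine ⟨by positivity, hα, ?_, ?_, ?_, ?_, ?_⟩
  · intro i hi
    rw [← hxc i hi i]
    exact hbyz i i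
  · intro i hi s t hs hst
    exact (hint i hi s hs).symm.trans (hint i hi t (hs.trans hst))
  · intro i hi s t hs hst
    rw [hsol i hi t (hs.trans hst), hsol i hi s hs, add_assoc,
      intervalIntegral.integral_add_adjacent_intervals (hint i hi s hs)
        ((hint i hi s hs).symm.trans (hint i hi t (hs.trans hst)))]
  · intro i hi s U hs hU
    exact (upd_le (hR s i hi) (hlocal i hi) hα (hw s i hi) hαβ (hU i hi)
      (fun j hj => by rw [hxc j hj i]; exact hU j hj)).1
  · intro i hi s U c T hs hU hT hTN hTc hc
    exact (upd_le (hR s i hi) (hlocal i hi) hα (hw s i hi) hαβ (hU i hi)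
      (fun j hj => by rw [hxc j hj i]; exact hU j hj)).2 T c hT.1 hT.2
        (fun j hj => by rw [hxc j (hTN hj) i]; exact hTc j hj) hc

lemma arcpUpdate_neg {n : ℕ} (Nin R : Finset (Fin n)) (w v : Fin n → ℝ) (xi : ℝ) :
    arcpUpdate Nin R w (fun j => - v j) (-xi) = - arcpUpdate Nin R w v xi := by
  unfold arcpUpdate
  rw [← Finset.sum_neg_distrib]
  exact Finset.sum_congr rfl (fun j _ => by ring)

lemma reach_good {n : ℕ} (Nin : Fin n → Finset (Fin n)) (N S : Finset (Fin n)) (f p : ℝ)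
    (hf0 : 0 ≤ f) (hp : 2 * f < p)
    (hlocal : ∀ i ∈ N,
      ((Nin i).filter fun j => j ∉ N).card ≤ ⌊f * (((Nin i).card : ℝ))⌋₊)
    (hS : S ⊆ N) (h : FracEdgeReachable Nin p S) :
    ∃ i ∈ S, ∃ T ⊆ N, Disjoint T S ∧ (T ⊆ Nin i ∧ ⌊f * (((Nin i).card : ℝ))⌋₊ < T.card) := by
  rcases h with ⟨i, hi, hd, hc⟩ | ⟨h0, _⟩
  swap
  · linarith
  refine ⟨i, hi, ((Nin i) \ S).filter fun j => j ∈ N, ?_, ?_, ?_, ?_⟩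
  · intro j hj; exact (Finset.mem_filter.1 hj).2
  · rw [Finset.disjoint_left]
    intro j hj
    exact (Finset.mem_sdiff.1 (Finset.mem_filter.1 hj).1).2
  · intro j hj
    exact (Finset.mem_sdiff.1 (Finset.mem_filter.1 hj).1).1
  · have h1 := Finset.card_filter_add_card_filter_not (s := (Nin i) \ S) (fun j => j ∈ N)
    have h2 : (((Nin i) \ S).filter fun j => j ∉ N).card ≤ ((Nin i).filter fun j => j ∉ N).card :=
      Finset.card_le_card (Finset.filter_subset_filter _ Finset.sdiff_subset)
    have h3 := hlocal i (hS hi)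
    have h4 : 2 * ⌊f * (((Nin i).card : ℝ))⌋₊ < ⌈p * (((Nin i).card : ℝ))⌉₊ := by
      rw [Nat.lt_ceil]
      have hd' : (0 : ℝ) < (Nin i).card := by exact_mod_cast hd
      have := Nat.floor_le (show 0 ≤ f * (((Nin i).card : ℝ)) by positivity)
      push_cast
      nlinarith
    omega

end ARCP

/-- Theorem 2 of the paper, sufficiency for time-invariant networks:
under the `f`-fraction local Byzantine model, with every normal node running ARC-P with
parameter `f ∈ [0,1/2)`, if the time-invariant digraph is `p`-fraction robust for some
`p` with `2f < p ≤ 1`, then CTRAC is achieved: the normal states converge to a common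
limit and remain in `[m_N(0), M_N(0)]`. -/
theorem stmt6 {n : ℕ}
    (Nin : Fin n → Finset (Fin n))
    (Normal : Finset (Fin n)) (hNe : Normal.Nonempty)
    (f p : ℝ) (hf0 : 0 ≤ f) (hf : f < 1 / 2) (hp : 2 * f < p) (hp1 : p ≤ 1)
    (hrobust : ARCP.FracRobust Nin p)
    -- the adversary set (the non-normal agents) is an f-fraction local set
    (hlocal : ∀ i ∈ Normal,
      ((Nin i).filter fun j => j ∉ Normal).card ≤ ⌊f * (((Nin i).card : ℝ))⌋₊)
    (α β : ℝ) (hα : 0 < α) (hαβ : α ≤ β)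
    (w : ℝ → Fin n → Fin n → ℝ)
    (hw : ∀ t : ℝ, ∀ i ∈ Normal, ∀ j ∈ Nin i, α ≤ w t j i ∧ w t j i ≤ β)
    (x : Fin n → ℝ → ℝ)                    -- agents' states
    (xc : Fin n → Fin n → ℝ → ℝ)           -- value conveyed by j intended for i
    (hxc : ∀ j ∈ Normal, ∀ i, xc j i = x j)  -- normal agents convey their own state
    (hbyz : ∀ j i, Continuous (xc j i))    -- Byzantine trajectories are continuous
    (R : ℝ → Fin n → Finset (Fin n))
    -- R t i is a valid ARC-P removal with parameter f
    (hR : ∀ t : ℝ, ∀ i ∈ Normal, ARCP.IsARCPRemoval (Nin i) (fun j => xc j i t) (x i t)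
      (⌊f * (((Nin i).card : ℝ))⌋₊) (R t i))
    -- Carathéodory solution (integral form) for each normal agent
    (hint : ∀ i ∈ Normal, ∀ t : ℝ, 0 ≤ t → IntervalIntegrable
      (fun s => ARCP.arcpUpdate (Nin i) (R s i) (fun j => w s j i)
        (fun j => xc j i s) (x i s)) volume 0 t)
    (hsol : ∀ i ∈ Normal, ∀ t : ℝ, 0 ≤ t → x i t = x i 0 + ∫ s in (0 : ℝ)..t,
      ARCP.arcpUpdate (Nin i) (R s i) (fun j => w s j i) (fun j => xc j i s) (x i s)) :
    (∃ L : ℝ, ∀ i ∈ Normal, Tendsto (x i) atTop (𝓝 L)) ∧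
    (∀ i ∈ Normal, ∀ t : ℝ, 0 ≤ t → x i t ∈ Set.Icc
      (Normal.inf' hNe fun j => x j 0) (Normal.sup' hNe fun j => x j 0)) := by

  have h1 := ARCP.mkUp Nin Normal (fun i => ⌊f * (((Nin i).card : ℝ))⌋₊) hlocal α β hα hαβ w hw x xc
    hxc hbyz R hR hint hsol
  have h2 := ARCP.mkUp Nin Normal (fun i => ⌊f * (((Nin i).card : ℝ))⌋₊) hlocal α β hα hαβ w hw
    (fun i t => - x i t) (fun j i t => - xc j i t)
    (fun j hj i => by rw [hxc j hj i]) (fun j i => (hbyz j i).neg) R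
    (fun t i hi => ARCP.isARCPRemoval_neg (hR t i hi))
    (fun i hi t ht => by
      simp only [ARCP.arcpUpdate_neg]
      exact (hint i hi t ht).neg)
    (fun i hi t ht => by
      simp only [ARCP.arcpUpdate_neg]
      rw [intervalIntegral.integral_neg, hsol i hi t ht]
      ring)
  simp only [ARCP.arcpUpdate_neg] at h2
  refine ⟨ARCP.consensus h1 h2 ?_ hNe, ?_⟩
  · intro S₁ S₂ hS₁ hS₂ hd hN₁ hN₂
    rcases hrobust S₁ S₂ hS₁ hS₂ hd with h | h
    · exact Or.inl (ARCP.reach_good Nin Normal S₁ f p hf0 hp hlocal hN₁ h)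
    · exact Or.inr (ARCP.reach_good Nin Normal S₂ f p hf0 hp hlocal hN₂ h)
  · intro i hi t ht
    constructor
    · have := h2.inv le_rfl (U := -(Normal.inf' hNe fun j => x j 0))
        (fun j hj => neg_le_neg (Finset.inf'_le (fun j => x j 0) hj)) i hi t ht
      linarith
    · exact h1.inv le_rfl (fun j hj => Finset.le_sup' (fun j => x j 0) hj) i hi t ht
end

section
/- (Sufficiency, time-varying networks.) Consider a time-varying network modeled by D(t) = (V, E(t)) under the f-fraction local Byzantine model, whose topology is governed by a piecewise constant switching signal with switching times {t_k} satisfying the dwell-time condition t_{k+1} − t_k ≥ τ for all k, for some τ > 0. Suppose each normal node updates its value according to ARC-P with parameter f ∈ [0,1/2). If there exists t' ≥ 0 such that D(t) is p-fraction robust for all t ≥ t', for some p with 2f < p ≤ 1, then the normal agents achieve continuous-time resilient asymptotic consensus (CTRAC): all normal states converge to a common limit and remain in [m_N(0), M_N(0)] for all t ≥ 0, for every choice of initial values and every admissible adversary behavior. -/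
open Finset Filter Topology MeasureTheory

namespace ARCP

theorem compare (x g : ℝ → ℝ) (hx : Continuous x) (K C D a b : ℝ) (hK : 0 < K) (ha : 0 ≤ a)
    (hab : a ≤ b)
    (hint : ∀ t : ℝ, 0 ≤ t → IntervalIntegrable g volume 0 t)
    (hsol : ∀ t : ℝ, 0 ≤ t → x t = x 0 + ∫ s in (0 : ℝ)..t, g s)
    (hg : ∀ s ∈ Set.Ico a b, g s ≤ K * (C - x s) - D) :
    x b ≤ C - (C - x a) * Real.exp (-K * (b - a)) - D / K * (1 - Real.exp (-K * (b - a))) := by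
  have key := le_gronwallBound_of_liminf_deriv_right_le (f := x)
    (f' := fun s => K * (C - x s) - D) (δ := x a) (K := -K) (ε := K * C - D) (a := a) (b := b)
    hx.continuousOn ?_ le_rfl ?_ b ⟨hab, le_rfl⟩
  · rw [gronwallBound_of_K_ne_0 (by linarith)] at key
    refine key.trans (le_of_eq ?_)
    field_simp
    ring
  · intro s hs r hr
    have hc : Continuous (fun s => K * (C - x s) - D) := by fun_prop
    have hd : HasDerivAt (fun z => ∫ u in s..z, (K * (C - x u) - D)) (K * (C - x s) - D) s :=
      intervalIntegral.integral_hasDerivAt_right (hc.intervalIntegrable _ _)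
        (hc.stronglyMeasurableAtFilter _ _) hc.continuousAt
    have h1 : ∀ᶠ z in 𝓝[>] s, slope (fun z => ∫ u in s..z, (K * (C - x u) - D)) s z < r := by
      have := (hasDerivAt_iff_tendsto_slope.1 hd).mono_left
        (nhdsWithin_mono s (fun z (hz : s < z) => ne_of_gt hz))
      exact this.eventually (gt_mem_nhds hr)
    have h2 : ∀ᶠ z in 𝓝[>] s, z ∈ Set.Ioo s b := Ioo_mem_nhdsGT hs.2
    refine (h1.and h2).frequently.mono ?_
    rintro z ⟨hz1, hz2⟩
    have hs0 : 0 ≤ s := ha.trans hs.1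
    have hz0 : 0 ≤ z := hs0.trans hz2.1.le
    have e : x z - x s = ∫ u in s..z, g u := by
      rw [hsol z hz0, hsol s hs0, ← intervalIntegral.integral_interval_sub_left (hint z hz0) (hint s hs0)]
      ring
    have hle : ∫ u in s..z, g u ≤ ∫ u in s..z, (K * (C - x u) - D) := by
      refine intervalIntegral.integral_mono_on hz2.1.le ((hint s hs0).symm.trans (hint z hz0))
        (hc.intervalIntegrable _ _) ?_
      intro u hu
      exact hg u ⟨hs.1.trans hu.1, hu.2.trans_lt hz2.2⟩
    refine lt_of_le_of_lt ?_ hz1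
    rw [slope_def_field, intervalIntegral.integral_same, sub_zero, e, inv_mul_eq_div]
    have : 0 < z - s := sub_pos.2 hz2.1
    gcongr
  · intro s hs
    apply le_of_eq; ring

theorem removalHigh_gt {n : ℕ} {Nin R : Finset (Fin n)} {v : Fin n → ℝ} {xi : ℝ} {F : ℕ}
    (h : RemovalHigh Nin v xi F R) : ∀ j ∈ R, xi < v j := by
  intro j hj
  obtain ⟨hs, ⟨h1, h2⟩ | ⟨h1, h2, h3⟩⟩ := h
  · rw [h2] at hj; exact (mem_filter.1 hj).2
  · by_contra hc
    push Not at hc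
    have : (Nin.filter fun j => xi < v j) ⊆ R.erase j := by
      intro k hk
      rw [mem_filter] at hk
      rw [mem_erase]
      refine ⟨by rintro rfl; linarith [hk.2], ?_⟩
      by_contra hkR
      have := h3 j hj k (mem_sdiff.2 ⟨hk.1, hkR⟩)
      linarith [hk.2]
    have := card_le_card this
    rw [card_erase_of_mem hj] at this
    have := card_pos.2 ⟨j, hj⟩
    omega

theorem removalHigh_le {n : ℕ} {Nin R A : Finset (Fin n)} {v : Fin n → ℝ} {xi C : ℝ} {F : ℕ}
    (h : RemovalHigh Nin v xi F R) (hxi : xi ≤ C) 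
    (hloc : (Nin.filter fun j => j ∉ A).card ≤ F) (hA : ∀ j ∈ A, v j ≤ C) :
    ∀ j ∈ Nin, j ∉ R → v j ≤ C := by
  intro j hj hjR
  by_contra hc
  push Not at hc
  obtain ⟨hs, ⟨h1, h2⟩ | ⟨h1, h2, h3⟩⟩ := h
  · apply hjR; rw [h2, mem_filter]; exact ⟨hj, by linarith⟩
  · have : insert j R ⊆ Nin.filter fun j => j ∉ A := by
      intro k hk
      rw [mem_insert] at hk
      rw [mem_filter]
      rcases hk with rfl | hk
      · exact ⟨hj, fun hh => by linarith [hA _ hh]⟩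
      · exact ⟨hs hk, fun hh => by linarith [hA _ hh, h3 k hk j (mem_sdiff.2 ⟨hj, hjR⟩)]⟩
    have := card_le_card this
    rw [card_insert_of_notMem hjR] at this
    omega

theorem removal_neg {n : ℕ} {Nin R : Finset (Fin n)} {v : Fin n → ℝ} {xi : ℝ} {F : ℕ}
    (h : IsARCPRemoval Nin v xi F R) : IsARCPRemoval Nin (fun j => - v j) (-xi) F R := by
  obtain ⟨Rhi, Rlo, rfl, h1, h2⟩ := h
  refine ⟨Rlo, Rhi, Finset.union_comm _ _, ?_, ?_⟩
  · simpa [RemovalHigh, RemovalLow] using h2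
  · simpa [RemovalHigh, RemovalLow] using h1

theorem removalLow_lt {n : ℕ} {Nin R : Finset (Fin n)} {v : Fin n → ℝ} {xi : ℝ} {F : ℕ}
    (h : RemovalLow Nin v xi F R) : R.card ≤ F := by
  obtain ⟨hs, ⟨h1, h2⟩ | ⟨h1, h2, h3⟩⟩ := h
  · rw [h2]; exact h1.le
  · exact h2.le

theorem update_le {n : ℕ} {Nin R A : Finset (Fin n)} {w v : Fin n → ℝ} {xi C α β : ℝ} {F : ℕ}
    (h : IsARCPRemoval Nin v xi F R) (hxi : xi ≤ C)
    (hloc : (Nin.filter fun j => j ∉ A).card ≤ F) (hA : ∀ j ∈ A, v j ≤ C)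
    (hα : 0 < α) (hαβ : α ≤ β) (hw : ∀ j ∈ Nin, α ≤ w j ∧ w j ≤ β) :
    arcpUpdate Nin R w v xi ≤ (n * β) * (C - xi) := by
  obtain ⟨Rhi, Rlo, rfl, h1, h2⟩ := h
  unfold arcpUpdate
  have hb : ∀ j ∈ Nin \ (Rhi ∪ Rlo), w j * (v j - xi) ≤ β * (C - xi) := by
    intro j hj
    simp only [Finset.mem_sdiff, mem_union, not_or] at hj
    have := removalHigh_le h1 hxi hloc hA j hj.1 hj.2.1
    obtain ⟨hw1, hw2⟩ := hw j hj.1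
    nlinarith
  refine (sum_le_card_nsmul _ _ _ hb).trans ?_
  rw [nsmul_eq_mul, mul_assoc]
  have : ((Nin \ (Rhi ∪ Rlo)).card : ℝ) ≤ n := by
    exact_mod_cast (card_le_univ _).trans (by simp)
  have h0 : 0 ≤ β * (C - xi) := mul_nonneg (by linarith) (by linarith)
  gcongr

theorem update_le' {n : ℕ} {Nin R A : Finset (Fin n)} {w v : Fin n → ℝ} {xi C V α β : ℝ} {F : ℕ}
    (h : IsARCPRemoval Nin v xi F R) (hxi : xi ≤ C)
    (hloc : (Nin.filter fun j => j ∉ A).card ≤ F) (hA : ∀ j ∈ A, v j ≤ C)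
    (hα : 0 < α) (hαβ : α ≤ β) (hw : ∀ j ∈ Nin, α ≤ w j ∧ w j ≤ β) (hV : V ≤ C)
    (L : Finset (Fin n)) (hL : L ⊆ Nin) (hLc : F < L.card) (hLV : ∀ j ∈ L, v j ≤ V) :
    arcpUpdate Nin R w v xi ≤ (n * β + α) * (C - xi) - α * (C - V) := by
  rcases le_or_gt xi V with hc | hc
  · have := update_le h hxi hloc hA hα hαβ hw
    nlinarith
  obtain ⟨Rhi, Rlo, rfl, h1, h2⟩ := h
  obtain ⟨k, hkL, hk⟩ : ∃ k ∈ L, k ∉ Rlo := by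
    by_contra! hh
    have := card_le_card (show L ⊆ Rlo from hh)
    have := removalLow_lt h2
    omega
  have hk' : k ∉ Rhi := fun hh => by linarith [removalHigh_gt h1 k hh, hLV k hkL]
  have hkm : k ∈ Nin \ (Rhi ∪ Rlo) := by
    simp only [Finset.mem_sdiff, mem_union, not_or]; exact ⟨hL hkL, hk', hk⟩
  unfold arcpUpdate
  have hb : ∀ j ∈ Nin \ (Rhi ∪ Rlo), w j * (v j - xi) ≤
      β * (C - xi) - (if j = k then α * (C - V) else 0) := by
    intro j hj
    simp only [Finset.mem_sdiff, mem_union, not_or] at hj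
    have := removalHigh_le h1 hxi hloc hA j hj.1 hj.2.1
    obtain ⟨hw1, hw2⟩ := hw j hj.1
    split_ifs with hjk
    · have := hLV k hkL
      rw [← hjk] at this
      nlinarith
    · nlinarith
  refine (sum_le_sum hb).trans ?_
  rw [sum_sub_distrib, sum_const, sum_ite_eq' , if_pos hkm, nsmul_eq_mul]
  have : ((Nin \ (Rhi ∪ Rlo)).card : ℝ) ≤ n := by
    exact_mod_cast (card_le_univ _).trans (by simp)
  have h0 : 0 ≤ β * (C - xi) := mul_nonneg (by linarith) (by linarith)
  have := mul_le_mul_of_nonneg_right this h0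
  nlinarith

structure Up_s7 {n : ℕ} (Nin : ℝ → Fin n → Finset (Fin n)) (F : ℝ → Fin n → ℕ)
    (N : Finset (Fin n)) (B α : ℝ) (x g : Fin n → ℝ → ℝ) : Prop where
  cont : ∀ i ∈ N, Continuous (x i)
  int : ∀ i ∈ N, ∀ t : ℝ, 0 ≤ t → IntervalIntegrable (g i) volume 0 t
  sol : ∀ i ∈ N, ∀ t : ℝ, 0 ≤ t → x i t = x i 0 + ∫ s in (0 : ℝ)..t, g i s
  h2 : ∀ i ∈ N, ∀ s C : ℝ, (∀ j ∈ N, x j s ≤ C) → g i s ≤ B * (C - x i s)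
  h3 : ∀ i ∈ N, ∀ s C V : ℝ, (∀ j ∈ N, x j s ≤ C) → V ≤ C → ∀ L : Finset (Fin n), L ⊆ Nin s i →
    L ⊆ N → F s i < L.card → (∀ j ∈ L, x j s ≤ V) → g i s ≤ (B + α) * (C - x i s) - α * (C - V)

theorem Up_s7.inv {n : ℕ} {Nin : ℝ → Fin n → Finset (Fin n)} {F : ℝ → Fin n → ℕ}
    {N : Finset (Fin n)} {B α : ℝ} {x g : Fin n → ℝ → ℝ} (h : Up_s7 Nin F N B α x g) (hB : 0 < B)
    {a C : ℝ} (ha : 0 ≤ a) (hC : ∀ j ∈ N, x j a ≤ C) {t : ℝ} (ht : a ≤ t) :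
    ∀ j ∈ N, x j t ≤ C := by
  by_contra! hcon
  obtain ⟨j0, hj0, hlt⟩ := hcon
  obtain ⟨E, hE1, hE2⟩ := exists_between hlt
  have hcl : IsClosed (⋃ j ∈ N, {s | E ≤ x j s}) := by
    apply isClosed_biUnion_finset
    intro j hj
    exact isClosed_le continuous_const (h.cont j hj)
  have hcp : IsCompact (Set.Icc a t ∩ ⋃ j ∈ N, {s | E ≤ x j s}) := isCompact_Icc.inter_right hcl
  obtain ⟨T, ⟨hT1, hT2⟩, hT3⟩ := hcp.exists_isLeast
    ⟨t, ⟨ht, le_rfl⟩, by simp only [Set.mem_iUnion]; exact ⟨j0, hj0, hE2.le⟩⟩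
  simp only [Set.mem_iUnion] at hT2
  obtain ⟨j, hj, hjT⟩ := hT2
  have := compare (x j) (g j) (h.cont j hj) B E 0 a T hB ha hT1.1 (h.int j hj) (h.sol j hj) (by
    intro s hs
    rw [sub_zero]
    apply h.h2 j hj
    intro k hk
    by_contra hh
    push Not at hh
    have := hT3 ⟨⟨hs.1, hs.2.le.trans hT1.2⟩, by
      simp only [Set.mem_iUnion]; exact ⟨k, hk, hh.le⟩⟩
    linarith [hs.2])
  have h1 := Real.exp_pos (-B * (T - a))
  have h2 := hC j hj
  have hjT' : E ≤ x j T := hjT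
  have : 0 < (E - x j a) * Real.exp (-B * (T - a)) := mul_pos (by linarith) h1
  simp at *
  linarith

/-- decay while staying under the bound -/
theorem Up_s7.decay {n : ℕ} {Nin : ℝ → Fin n → Finset (Fin n)} {F : ℝ → Fin n → ℕ}
    {N : Finset (Fin n)} {B α : ℝ} {x g : Fin n → ℝ → ℝ} (h : Up_s7 Nin F N B α x g) (hB : 0 < B)
    {a C τ η : ℝ} (ha : 0 ≤ a) (hC : ∀ j ∈ N, x j a ≤ C) {t : ℝ} (ht : a ≤ t) (ht' : t ≤ a + τ)
    {j : Fin n} (hj : j ∈ N) (hη : 0 ≤ η) (hx : x j a ≤ C - η) :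
    x j t ≤ C - Real.exp (-B * τ) * η := by
  have := compare (x j) (g j) (h.cont j hj) B C 0 a t hB ha ht (h.int j hj) (h.sol j hj) (by
    intro s hs
    rw [sub_zero]
    exact h.h2 j hj _ _ (h.inv hB ha hC hs.1))
  have he : Real.exp (-B * τ) ≤ Real.exp (-B * (t - a)) := by
    apply Real.exp_le_exp.2
    nlinarith
  have h0 := Real.exp_pos (-B * τ)
  have : η * Real.exp (-B * τ) ≤ (C - x j a) * Real.exp (-B * (t - a)) := by
    apply mul_le_mul <;> first | assumption | linarith
  simp at *
  linarith

/-- the contraction factor -/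
noncomputable def cfac (B α τ : ℝ) : ℝ :=
  Real.exp (-B * τ) * (α / (B + α) * (1 - Real.exp (-(B + α) * (τ / 2))) * Real.exp (-B * τ))

theorem Up_s7.pull {n : ℕ} {Nin : ℝ → Fin n → Finset (Fin n)} {F : ℝ → Fin n → ℕ}
    {N : Finset (Fin n)} {B α : ℝ} {x g : Fin n → ℝ → ℝ} (h : Up_s7 Nin F N B α x g) (hB : 0 < B)
    (hα : 0 < α)
    {a a' C τ η : ℝ} (hτ : 0 < τ) (ha : 0 ≤ a) (hC : ∀ j ∈ N, x j a ≤ C) (ha1 : a ≤ a')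
    (ha2 : a' + τ / 2 ≤ a + τ) (hη : 0 ≤ η)
    (hconst : ∀ s ∈ Set.Ico a' (a' + τ / 2), Nin s = Nin a' ∧ F s = F a')
    {i : Fin n} (hi : i ∈ N) (L : Finset (Fin n)) (hL : L ⊆ Nin a' i) (hLN : L ⊆ N)
    (hLc : F a' i < L.card) (hLx : ∀ j ∈ L, x j a ≤ C - η) :
    x i (a + τ) ≤ C - cfac B α τ * η := by
  have hm : x i (a' + τ / 2) ≤ C - (α / (B + α) * (1 - Real.exp (-(B + α) * (τ / 2))) *
      Real.exp (-B * τ)) * η := by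
    have := compare (x i) (g i) (h.cont i hi) (B + α) C (α * (Real.exp (-B * τ) * η)) a'
      (a' + τ / 2) (by linarith) (by linarith) (by linarith) (h.int i hi) (h.sol i hi) (by
        intro s hs
        have hss : s ≤ a + τ := by linarith [hs.2]
        have has : a ≤ s := ha1.trans hs.1
        have := h.h3 i hi s C (C - Real.exp (-B * τ) * η) (h.inv hB ha hC has)
          (by have := Real.exp_pos (-B * τ); nlinarith) L (by rw [(hconst s hs).1]; exact hL) hLN
          (by rw [(hconst s hs).2]; exact hLc)
          (fun j hj => h.decay hB ha hC has hss (hLN hj) hη (hLx j hj))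
        simpa using this)
    have h1 := h.inv hB ha hC ha1 i hi
    have h2 := mul_nonneg (sub_nonneg.2 h1) (Real.exp_pos (-(B + α) * (a' + τ / 2 - a'))).le
    rw [show a' + τ / 2 - a' = τ / 2 by ring] at *
    refine this.trans ?_
    have e : α * (Real.exp (-B * τ) * η) / (B + α) * (1 - Real.exp (-(B + α) * (τ / 2))) =
      (α / (B + α) * (1 - Real.exp (-(B + α) * (τ / 2))) * Real.exp (-B * τ)) * η := by ring
    rw [e]
    linarith
  have he : Real.exp (-(B + α) * (τ / 2)) ≤ 1 := by
    apply Real.exp_le_one_iff.2; nlinarith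
  have := h.decay hB (a := a' + τ / 2) (t := a + τ) (τ := τ) (by linarith)
    (h.inv hB ha hC (by linarith)) ha2 (by linarith) hi
    (mul_nonneg (mul_nonneg (mul_nonneg (by positivity) (by linarith)) (Real.exp_pos _).le) hη) hm
  unfold cfac
  rw [mul_assoc]
  exact this

theorem cfac_pos {B α τ : ℝ} (hB : 0 < B) (hα : 0 < α) (hτ : 0 < τ) : 0 < cfac B α τ := by
  have he : Real.exp (-(B + α) * (τ / 2)) < 1 := by
    apply Real.exp_lt_one_iff.2; nlinarith
  have : 0 < 1 - Real.exp (-(B + α) * (τ / 2)) := by linarith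
  unfold cfac
  positivity

theorem cfac_le {B α τ : ℝ} (hB : 0 < B) (hα : 0 < α) (hτ : 0 < τ) :
    cfac B α τ ≤ Real.exp (-B * τ) := by
  have he : Real.exp (-(B + α) * (τ / 2)) < 1 := by
    apply Real.exp_lt_one_iff.2; nlinarith
  have he' := Real.exp_pos (-(B + α) * (τ / 2))
  have he2 : Real.exp (-B * τ) ≤ 1 := by
    apply Real.exp_le_one_iff.2; nlinarith
  unfold cfac
  apply mul_le_of_le_one_right (Real.exp_pos _).le
  apply mul_le_one₀ _ (Real.exp_pos _).le he2
  apply mul_le_one₀ _ (by linarith) (by linarith)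
  rw [div_le_one (by linarith)]
  linarith

theorem cfac_le_one {B α τ : ℝ} (hB : 0 < B) (hα : 0 < α) (hτ : 0 < τ) :
    cfac B α τ ≤ 1 := by
  refine (cfac_le hB hα hτ).trans ?_
  apply Real.exp_le_one_iff.2; nlinarith

/-- set of high nodes -/
noncomputable def hiSet {n : ℕ} (N : Finset (Fin n)) (x : Fin n → ℝ → ℝ) (a E : ℝ) :
    Finset (Fin n) := N.filter fun j => E < x j a

theorem Up_s7.subset {n : ℕ} {Nin : ℝ → Fin n → Finset (Fin n)} {F : ℝ → Fin n → ℕ}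
    {N : Finset (Fin n)} {B α : ℝ} {x g : Fin n → ℝ → ℝ} (h : Up_s7 Nin F N B α x g) (hB : 0 < B)
    (hα : 0 < α) {a C τ η : ℝ} (hτ : 0 < τ) (ha : 0 ≤ a) (hC : ∀ j ∈ N, x j a ≤ C)
    (hη : 0 ≤ η) :
    hiSet N x (a + τ) (C - cfac B α τ * η) ⊆ hiSet N x a (C - η) := by
  intro j hj
  rw [hiSet, mem_filter] at *
  refine ⟨hj.1, ?_⟩
  by_contra hh
  push Not at hh
  have := h.decay hB ha hC (t := a + τ) (by linarith) le_rfl hj.1 hη hh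
  have h2 := mul_le_mul_of_nonneg_right (cfac_le hB hα hτ) hη
  linarith [hj.2]

theorem Up_s7.card_lt {n : ℕ} {Nin : ℝ → Fin n → Finset (Fin n)} {F : ℝ → Fin n → ℕ}
    {N : Finset (Fin n)} {B α : ℝ} {x g : Fin n → ℝ → ℝ} (h : Up_s7 Nin F N B α x g) (hB : 0 < B)
    (hα : 0 < α) {a a' C τ η p : ℝ} (hτ : 0 < τ) (ha : 0 ≤ a) (hC : ∀ j ∈ N, x j a ≤ C)
    (hη : 0 ≤ η) (ha1 : a ≤ a')
    (ha2 : a' + τ / 2 ≤ a + τ)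
    (hconst : ∀ s ∈ Set.Ico a' (a' + τ / 2), Nin s = Nin a' ∧ F s = F a')
    (hloc : ∀ i ∈ N, ((Nin a' i).filter fun j => j ∉ N).card ≤ F a' i)
    (hpF : ∀ i ∈ N, 0 < (Nin a' i).card → 2 * F a' i < ⌈p * (((Nin a' i).card : ℝ))⌉₊)
    (hp : p ≠ 0)
    (hreach : FracEdgeReachable (Nin a') p (hiSet N x a (C - η))) :
    (hiSet N x (a + τ) (C - cfac B α τ * η)).card < (hiSet N x a (C - η)).card := by
  obtain ⟨i, hi, hd, hc⟩ | ⟨h0, -⟩ := hreach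
  swap
  · exact absurd h0 hp
  have hiN : i ∈ N := (mem_filter.1 hi).1
  apply card_lt_card
  refine ⟨h.subset hB hα hτ ha hC hη, fun hsub => ?_⟩
  have hi' := hsub hi
  rw [hiSet, mem_filter] at hi'
  have hp1 := hpF i hiN hd
  have hl := hloc i hiN
  have := h.pull hB hα hτ ha hC ha1 ha2 hη hconst hiN
    (((Nin a' i) \ (hiSet N x a (C - η))).filter fun j => j ∈ N)
    (fun j hj => (mem_sdiff.1 (mem_filter.1 hj).1).1)
    (fun j hj => (mem_filter.1 hj).2)
    (by
      have e := card_filter_add_card_filter_not (s := (Nin a' i) \ (hiSet N x a (C - η)))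
        (fun j => j ∈ N)
      have e2 : (((Nin a' i) \ (hiSet N x a (C - η))).filter fun j => ¬ j ∈ N).card ≤
        ((Nin a' i).filter fun j => j ∉ N).card :=
        card_le_card (filter_subset_filter _ sdiff_subset)
      omega)
    (by
      intro j hj
      have hj2 := (mem_filter.1 hj).2
      have hj1 := (mem_sdiff.1 (mem_filter.1 hj).1).2
      by_contra hh
      push Not at hh
      exact hj1 (mem_filter.2 ⟨hj2, hh⟩))
  linarith [hi'.2]

theorem exists_const {n : ℕ} (Nin : ℝ → Fin n → Finset (Fin n))
    (τ : ℝ) (hτ : 0 < τ)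
    (tseq : ℕ → ℝ) (htseq0 : tseq 0 = 0)
    (hdwell : ∀ k : ℕ, τ ≤ tseq (k + 1) - tseq k)
    (hswitch : ∀ k : ℕ, ∀ t ∈ Set.Ico (tseq k) (tseq (k + 1)), Nin t = Nin (tseq k))
    (a : ℝ) (ha : 0 ≤ a) : ∃ a', a ≤ a' ∧ a' + τ / 2 ≤ a + τ ∧
      ∀ s ∈ Set.Ico a' (a' + τ / 2), Nin s = Nin a' := by
  classical
  have hk : ∀ k : ℕ, k * τ ≤ tseq k := by
    intro k
    induction k with
    | zero => simp [htseq0]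
    | succ k ih => push_cast; linarith [hdwell k]
  have hex : ∃ k, a < tseq k := by
    obtain ⟨k, hk'⟩ := exists_nat_gt (a / τ)
    rw [div_lt_iff₀ hτ] at hk'
    exact ⟨k, hk'.trans_le (hk k)⟩
  obtain ⟨m, hm⟩ : ∃ m, Nat.find hex = m + 1 := by
    apply Nat.exists_eq_succ_of_ne_zero
    intro h0
    have := Nat.find_spec hex
    rw [h0, htseq0] at this
    linarith
  have h1 : a < tseq (m + 1) := hm ▸ Nat.find_spec hex
  have h2 : tseq m ≤ a := not_lt.1 (Nat.find_min hex (by omega))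
  rcases le_or_gt (a + τ / 2) (tseq (m + 1)) with hc | hc
  · refine ⟨a, le_rfl, by linarith, fun s hs => ?_⟩
    rw [hswitch m s ⟨h2.trans hs.1, hs.2.trans_le hc⟩, hswitch m a ⟨h2, h1⟩]
  · refine ⟨tseq (m + 1), h1.le, by linarith, fun s hs => ?_⟩
    exact hswitch (m + 1) s ⟨hs.1, by linarith [hs.2, hdwell (m + 1)]⟩

theorem contract_s7 {n : ℕ} {Nin : ℝ → Fin n → Finset (Fin n)} {F : ℝ → Fin n → ℕ}
    {N : Finset (Fin n)} {B α : ℝ} {x g : Fin n → ℝ → ℝ} (h : Up_s7 Nin F N B α x g)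
    (h' : Up_s7 Nin F N B α (fun i t => - x i t) (fun i t => - g i t)) (hB : 0 < B)
    (hα : 0 < α) {τ p t0 : ℝ} (hτ : 0 < τ) (ht0 : 0 ≤ t0)
    (hconst : ∀ a : ℝ, 0 ≤ a → ∃ a', a ≤ a' ∧ a' + τ / 2 ≤ a + τ ∧
      ∀ s ∈ Set.Ico a' (a' + τ / 2), Nin s = Nin a' ∧ F s = F a')
    (hloc : ∀ t, ∀ i ∈ N, ((Nin t i).filter fun j => j ∉ N).card ≤ F t i)
    (hpF : ∀ t, ∀ i ∈ N, 0 < (Nin t i).card → 2 * F t i < ⌈p * (((Nin t i).card : ℝ))⌉₊)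
    (hp : p ≠ 0)
    (hrob : ∀ t, t0 ≤ t → FracRobust (Nin t) p) (C C' : ℝ) (m : ℕ) :
    ∀ a η : ℝ, t0 ≤ a → 0 ≤ η → C' + η ≤ C - η → (∀ j ∈ N, x j a ≤ C) → (∀ j ∈ N, C' ≤ x j a) →
      (hiSet N x a (C - η)).card + (hiSet N (fun i t => - x i t) a (-C' - η)).card ≤ m →
      (∀ j ∈ N, x j (a + m * τ) ≤ C - cfac B α τ ^ m * η) ∨
      (∀ j ∈ N, C' + cfac B α τ ^ m * η ≤ x j (a + m * τ)) := by
  have hc0 := cfac_pos hB hα hτ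
  have hc1 := cfac_le_one hB hα hτ
  have hempty : ∀ (y : Fin n → ℝ → ℝ) (a E : ℝ), ¬ (hiSet N y a E).Nonempty →
      ∀ j ∈ N, y j a ≤ E := by
    intro y a E hne j hj
    by_contra hh
    push Not at hh
    exact hne ⟨j, mem_filter.2 ⟨hj, hh⟩⟩
  induction m with
  | zero =>
    intro a η ha hη hηC hC hC' hcard
    left
    simp only [pow_zero, one_mul, Nat.cast_zero, zero_mul, add_zero]
    apply hempty
    rw [← card_pos]
    omega
  | succ m ih =>
    intro a η ha hη hηC hC hC' hcard
    have ha0 := ht0.trans ha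
    have hpw : cfac B α τ ^ (m + 1) * η ≤ η :=
      mul_le_of_le_one_left hη (pow_le_one₀ hc0.le hc1)
    have hlater : a ≤ a + ((m + 1 : ℕ) : ℝ) * τ := by
      have : 0 ≤ ((m + 1 : ℕ) : ℝ) * τ := by positivity
      linarith
    have hCn : ∀ j ∈ N, - x j a ≤ - C' := fun j hj => neg_le_neg (hC' j hj)
    by_cases hS : (hiSet N x a (C - η)).Nonempty
    swap
    · left
      intro j hj
      have := h.inv hB ha0 (hempty _ _ _ hS) hlater j hj
      linarith
    by_cases hT : (hiSet N (fun i t => - x i t) a (-C' - η)).Nonempty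
    swap
    · right
      intro j hj
      have := h'.inv hB ha0 (hempty _ _ _ hT) hlater j hj
      linarith
    have hdisj : Disjoint (hiSet N x a (C - η)) (hiSet N (fun i t => - x i t) a (-C' - η)) := by
      rw [Finset.disjoint_left]
      intro j h1 h2
      have h1 := (mem_filter.1 h1).2
      have h2 := (mem_filter.1 h2).2
      linarith
    obtain ⟨a', ha1, ha2, hcon⟩ := hconst a ha0
    have s1 := card_le_card (h.subset hB hα hτ ha0 hC hη)
    have s2 := card_le_card (h'.subset hB hα hτ ha0 hCn hη)
    have hlt : (hiSet N x (a + τ) (C - cfac B α τ * η)).card +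
        (hiSet N (fun i t => - x i t) (a + τ) (-C' - cfac B α τ * η)).card ≤ m := by
      rcases hrob a' (ha.trans ha1) _ _ hS hT hdisj with hr | hr
      · have := h.card_lt hB hα hτ ha0 hC hη ha1 ha2 hcon (hloc a') (hpF a') hp hr
        omega
      · have := h'.card_lt hB hα hτ ha0 hCn hη ha1 ha2 hcon (hloc a') (hpF a') hp hr
        omega
    have hcη : cfac B α τ * η ≤ η := mul_le_of_le_one_left hη hc1
    have := ih (a + τ) (cfac B α τ * η) (by linarith) (by positivity) (by linarith)
      (h.inv hB ha0 hC (by linarith))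
      (fun j hj => by
        have := h'.inv hB ha0 hCn (t := a + τ) (by linarith) j hj
        linarith) hlt
    have e1 : a + τ + m * τ = a + ((m + 1 : ℕ) : ℝ) * τ := by push_cast; ring
    have e2 : cfac B α τ ^ m * (cfac B α τ * η) = cfac B α τ ^ (m + 1) * η := by ring
    rw [e1, e2] at this
    exact this

theorem consensus_s7 {n : ℕ} {N : Finset (Fin n)} (hNe : N.Nonempty) {x : Fin n → ℝ → ℝ}
    {t0 d q : ℝ} (hq0 : 0 < q) (hq1 : q ≤ 1) (hd : 0 ≤ d)
    (hup : ∀ a C, t0 ≤ a → (∀ j ∈ N, x j a ≤ C) → ∀ t, a ≤ t → ∀ j ∈ N, x j t ≤ C)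
    (hlo : ∀ a C, t0 ≤ a → (∀ j ∈ N, C ≤ x j a) → ∀ t, a ≤ t → ∀ j ∈ N, C ≤ x j t)
    (hcon : ∀ a C C', t0 ≤ a → C' ≤ C → (∀ j ∈ N, x j a ≤ C) → (∀ j ∈ N, C' ≤ x j a) →
      (∀ j ∈ N, x j (a + d) ≤ C - q * (C - C')) ∨ (∀ j ∈ N, C' + q * (C - C') ≤ x j (a + d))) :
    ∃ L : ℝ, ∀ i ∈ N, Tendsto (x i) atTop (𝓝 L) := by
  obtain ⟨i0, hi0⟩ := hNe
  have hNe : N.Nonempty := ⟨i0, hi0⟩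
  obtain ⟨D, hD⟩ : ∃ D, ∀ m : ℕ, ∃ a C C', t0 ≤ a ∧ (∀ j ∈ N, x j a ≤ C) ∧ (∀ j ∈ N, C' ≤ x j a) ∧
      C - C' = (1 - q) ^ m * D := by
    refine ⟨(N.sup' hNe fun j => x j t0) - (N.inf' hNe fun j => x j t0), fun m => ?_⟩
    induction m with
    | zero =>
      refine ⟨t0, N.sup' hNe fun j => x j t0, N.inf' hNe fun j => x j t0, le_rfl, fun j hj => le_sup' (fun j => x j t0) hj,
        fun j hj => inf'_le (fun j => x j t0) hj, by simp⟩
    | succ m ih =>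
      obtain ⟨a, C, C', ha, h1, h2, h3⟩ := ih
      rcases hcon a C C' ha ((h2 i0 hi0).trans (h1 i0 hi0)) h1 h2 with h | h
      · refine ⟨a + d, _, C', by linarith, h, hlo a C' ha h2 _ (by linarith), ?_⟩
        rw [pow_succ, mul_right_comm, ← h3]; ring
      · refine ⟨a + d, C, _, by linarith, hup a C ha h1 _ (by linarith), h, ?_⟩
        rw [pow_succ, mul_right_comm, ← h3]; ring
  have key : ∀ ε > 0, ∃ T, ∀ s ≥ T, ∀ t ≥ T, ∀ i ∈ N, ∀ j ∈ N, |x i s - x j t| < ε := by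
    intro ε hε
    have hlim : Tendsto (fun m : ℕ => (1 - q) ^ m * D) atTop (𝓝 (0 * D)) :=
      (tendsto_pow_atTop_nhds_zero_of_lt_one (by linarith) (by linarith)).mul_const D
    rw [zero_mul] at hlim
    obtain ⟨m, hm⟩ := (hlim.eventually (gt_mem_nhds hε)).exists
    obtain ⟨a, C, C', ha, h1, h2, h3⟩ := hD m
    refine ⟨a, fun s hs t ht i hi j hj => ?_⟩
    have a1 := hup a C ha h1 s hs i hi
    have a2 := hlo a C' ha h2 s hs i hi
    have a3 := hup a C ha h1 t ht j hj
    have a4 := hlo a C' ha h2 t ht j hj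
    rw [abs_lt]
    constructor <;> linarith
  have hcs : CauchySeq (x i0) := by
    rw [Metric.cauchySeq_iff]
    intro ε hε
    obtain ⟨T, hT⟩ := key ε hε
    exact ⟨T, fun s hs t ht => by rw [Real.dist_eq]; exact hT s hs t ht i0 hi0 i0 hi0⟩
  obtain ⟨L, hL⟩ := cauchySeq_tendsto_of_complete hcs
  refine ⟨L, fun i hi => ?_⟩
  have : Tendsto (fun t => x i t - x i0 t) atTop (𝓝 0) := by
    rw [Metric.tendsto_atTop]
    intro ε hε
    obtain ⟨T, hT⟩ := key ε hε
    exact ⟨T, fun t ht => by rw [Real.dist_eq, sub_zero]; exact hT t ht t ht i hi i0 hi0⟩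
  simpa using this.add hL

end ARCP

/-- Theorem 3 of the paper, sufficiency for time-varying networks:
under the `f`-fraction local Byzantine model, with a piecewise constant switching
topology whose switching times satisfy the dwell-time condition `t_{k+1} - t_k ≥ τ > 0`,
if every normal node runs ARC-P with parameter `f ∈ [0,1/2)` and there is `t' ≥ 0` such
that the digraph `D(t)` is `p`-fraction robust for all `t ≥ t'`, with `2f < p ≤ 1`,
then CTRAC is achieved. -/
theorem stmt7 {n : ℕ}
    (Nin : ℝ → Fin n → Finset (Fin n))     -- time-varying in-neighborhoods
    -- switching times with dwell time τ; the topology is constant between switches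
    (τ : ℝ) (hτ : 0 < τ)
    (tseq : ℕ → ℝ) (htseq0 : tseq 0 = 0)
    (hdwell : ∀ k : ℕ, τ ≤ tseq (k + 1) - tseq k)
    (hswitch : ∀ k : ℕ, ∀ t ∈ Set.Ico (tseq k) (tseq (k + 1)), Nin t = Nin (tseq k))
    (Normal : Finset (Fin n)) (hNe : Normal.Nonempty)
    (f p : ℝ) (hf0 : 0 ≤ f) (hf : f < 1 / 2) (hp : 2 * f < p) (hp1 : p ≤ 1)
    -- the network is eventually p-fraction robust
    (hrobust : ∃ t' : ℝ, 0 ≤ t' ∧ ∀ t : ℝ, t' ≤ t → ARCP.FracRobust (Nin t) p)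
    -- the adversary set (the non-normal agents) is an f-fraction local set
    (hlocal : ∀ t : ℝ, ∀ i ∈ Normal,
      ((Nin t i).filter fun j => j ∉ Normal).card ≤ ⌊f * (((Nin t i).card : ℝ))⌋₊)
    (α β : ℝ) (hα : 0 < α) (hαβ : α ≤ β)
    (w : ℝ → Fin n → Fin n → ℝ)
    (hw : ∀ t : ℝ, ∀ i ∈ Normal, ∀ j ∈ Nin t i, α ≤ w t j i ∧ w t j i ≤ β)
    (x : Fin n → ℝ → ℝ)                    -- agents' states
    (xc : Fin n → Fin n → ℝ → ℝ)           -- value conveyed by j intended for i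
    (hxc : ∀ j ∈ Normal, ∀ i, xc j i = x j)  -- normal agents convey their own state
    (hbyz : ∀ j i, Continuous (xc j i))    -- Byzantine trajectories are continuous
    (R : ℝ → Fin n → Finset (Fin n))
    -- R t i is a valid ARC-P removal with parameter f, i.e. F_i(t) = ⌊f ⬝ d_i(t)⌋
    (hR : ∀ t : ℝ, ∀ i ∈ Normal,
      ARCP.IsARCPRemoval (Nin t i) (fun j => xc j i t) (x i t)
        (⌊f * (((Nin t i).card : ℝ))⌋₊) (R t i))
    -- Carathéodory solution (integral form) for each normal agent
    (hint : ∀ i ∈ Normal, ∀ t : ℝ, 0 ≤ t → IntervalIntegrable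
      (fun s => ARCP.arcpUpdate (Nin s i) (R s i) (fun j => w s j i)
        (fun j => xc j i s) (x i s)) volume 0 t)
    (hsol : ∀ i ∈ Normal, ∀ t : ℝ, 0 ≤ t → x i t = x i 0 + ∫ s in (0 : ℝ)..t,
      ARCP.arcpUpdate (Nin s i) (R s i) (fun j => w s j i) (fun j => xc j i s) (x i s)) :
    (∃ L : ℝ, ∀ i ∈ Normal, Tendsto (x i) atTop (𝓝 L)) ∧
    (∀ i ∈ Normal, ∀ t : ℝ, 0 ≤ t → x i t ∈ Set.Icc
      (Normal.inf' hNe fun j => x j 0) (Normal.sup' hNe fun j => x j 0)) := by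
  classical
  obtain ⟨t0, ht0, hrob⟩ := hrobust
  obtain ⟨i0, hi0⟩ := id hNe
  have hn : (0 : ℝ) < n := by exact_mod_cast i0.pos
  have hβ : 0 < β := hα.trans_le hαβ
  have hB : 0 < n * β := mul_pos hn hβ
  have hcont : ∀ i ∈ Normal, Continuous (x i) := fun i hi => hxc i hi i ▸ hbyz i i
  have hup : ARCP.Up_s7 Nin (fun t i => ⌊f * (((Nin t i).card : ℝ))⌋₊) Normal (n * β) α x
      (fun i s => ARCP.arcpUpdate (Nin s i) (R s i) (fun j => w s j i)
        (fun j => xc j i s) (x i s)) := by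
    refine ⟨hcont, hint, hsol, ?_, ?_⟩
    · intro i hi s C hC
      exact ARCP.update_le (hR s i hi) (hC i hi) (hlocal s i hi)
        (fun j hj => by rw [hxc j hj i]; exact hC j hj) hα hαβ (hw s i hi)
    · intro i hi s C V hC hV L hL hLN hLc hLV
      exact ARCP.update_le' (hR s i hi) (hC i hi) (hlocal s i hi)
        (fun j hj => by rw [hxc j hj i]; exact hC j hj) hα hαβ (hw s i hi) hV L hL hLc
        (fun j hj => by rw [hxc j (hLN hj) i]; exact hLV j hj)
  have hneg : ∀ i s, - ARCP.arcpUpdate (Nin s i) (R s i) (fun j => w s j i)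
        (fun j => xc j i s) (x i s) = ARCP.arcpUpdate (Nin s i) (R s i) (fun j => w s j i)
        (fun j => - xc j i s) (- x i s) := by
    intro i s
    unfold ARCP.arcpUpdate
    rw [← Finset.sum_neg_distrib]
    refine Finset.sum_congr rfl fun j _ => ?_
    ring
  have hlo : ARCP.Up_s7 Nin (fun t i => ⌊f * (((Nin t i).card : ℝ))⌋₊) Normal (n * β) α
      (fun i t => - x i t)
      (fun i s => - ARCP.arcpUpdate (Nin s i) (R s i) (fun j => w s j i)
        (fun j => xc j i s) (x i s)) := by
    refine ⟨fun i hi => (hcont i hi).neg, fun i hi t ht => (hint i hi t ht).neg, ?_, ?_, ?_⟩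
    · intro i hi t ht
      rw [hsol i hi t ht, intervalIntegral.integral_neg]
      ring
    · intro i hi s C hC
      rw [hneg]
      exact ARCP.update_le (ARCP.removal_neg (hR s i hi)) (hC i hi) (hlocal s i hi)
        (fun j hj => by rw [hxc j hj i]; exact hC j hj) hα hαβ (hw s i hi)
    · intro i hi s C V hC hV L hL hLN hLc hLV
      rw [hneg]
      exact ARCP.update_le' (ARCP.removal_neg (hR s i hi)) (hC i hi) (hlocal s i hi)
        (fun j hj => by rw [hxc j hj i]; exact hC j hj) hα hαβ (hw s i hi) hV L hL hLc
        (fun j hj => by rw [hxc j (hLN hj) i]; exact hLV j hj)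
  have hU : ∀ a C, 0 ≤ a → (∀ j ∈ Normal, x j a ≤ C) → ∀ t, a ≤ t → ∀ j ∈ Normal, x j t ≤ C :=
    fun a C ha hC t ht => hup.inv hB ha hC ht
  have hL : ∀ a C, 0 ≤ a → (∀ j ∈ Normal, C ≤ x j a) → ∀ t, a ≤ t → ∀ j ∈ Normal, C ≤ x j t :=
    fun a C ha hC t ht j hj => neg_le_neg_iff.1
      (hlo.inv hB ha (fun k hk => neg_le_neg (hC k hk)) ht j hj)
  constructor
  · have hc0 := ARCP.cfac_pos hB hα hτ
    have hc1 := ARCP.cfac_le_one hB hα hτ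
    have hq1 : ARCP.cfac (n * β) α τ ^ (2 * n) ≤ 1 := pow_le_one₀ hc0.le hc1
    refine ARCP.consensus_s7 hNe (t0 := t0) (d := ((2 * n : ℕ) : ℝ) * τ)
      (q := ARCP.cfac (n * β) α τ ^ (2 * n) / 2) (by positivity) (by linarith) (by positivity)
      (fun a C ha => hU a C (ht0.trans ha)) (fun a C ha => hL a C (ht0.trans ha)) ?_
    intro a C C' ha hCC h1 h2
    have := ARCP.contract_s7 hup hlo hB hα hτ ht0 (p := p) ?_ hlocal ?_ (by linarith) hrob C C' (2 * n)
      a ((C - C') / 2) ha (by linarith) (by linarith) h1 h2 ?_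
    · rw [show ARCP.cfac (n * β) α τ ^ (2 * n) / 2 * (C - C') =
        ARCP.cfac (n * β) α τ ^ (2 * n) * ((C - C') / 2) by ring]
      exact this
    · intro a ha
      obtain ⟨a', h1, h2, h3⟩ := ARCP.exists_const Nin τ hτ tseq htseq0 hdwell hswitch a ha
      exact ⟨a', h1, h2, fun s hs => ⟨h3 s hs, by simp only [h3 s hs]⟩⟩
    · intro t i hi hd
      have hd' : (0 : ℝ) < (Nin t i).card := by exact_mod_cast hd
      rw [Nat.lt_ceil]
      push_cast
      have := Nat.floor_le (mul_nonneg hf0 hd'.le)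
      nlinarith
    · have c1 := Finset.card_le_univ (ARCP.hiSet Normal x a (C - (C - C') / 2))
      have c2 := Finset.card_le_univ (ARCP.hiSet Normal (fun i t => - x i t) a (-C' - (C - C') / 2))
      simp only [Fintype.card_fin] at c1 c2
      omega
  · intro i hi t ht
    exact ⟨hL 0 _ le_rfl (fun j hj => Finset.inf'_le (fun j => x j 0) hj) t ht i hi,
      hU 0 _ le_rfl (fun j hj => Finset.le_sup' (fun j => x j 0) hj) t ht i hi⟩
end
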